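/- arXiv:2003.10422 — 2 statements merged into one kernel-verified Lean document; each statement's English description precedes it below -/
import Mathlib

section
/- Let f_1, …, f_n : ℝ^d → ℝ be convex and L-smooth (i.e. ‖∇f_i(y) − ∇f_i(x)‖ ≤ L‖x − y‖ for all x, y), let f = (1/n)Σ_i f_i attain its minimum at x*, and set ζ̄² = (1/n)Σ_{i=1}^n ‖∇f_i(x*)‖². Then for any points x_1, …, x_n ∈ ℝ^d with average x̄ = (1/n)Σ_i x_i, it holds that (1/n)·Σ_{i=1}^n ‖∇f_i(x_i)‖² ≤ (3L²/n)·Σ_{i=1}^n ‖x_i − x̄‖² + 6L·(f(x̄) − f(x*)) + 3ζ̄². -/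
theorem gtb_line {d : ℕ} {f : EuclideanSpace ℝ (Fin d) → ℝ} (hf : Differentiable ℝ f)
    (x v : EuclideanSpace ℝ (Fin d)) (t : ℝ) :
    HasDerivAt (fun s : ℝ => f (x + s • v)) (inner ℝ (gradient f (x + t • v)) v) t := by
  have h1 := (hf (x + t • v)).hasGradientAt.hasFDerivAt
  have h2 : HasDerivAt (fun s : ℝ => x + s • v) v t := by
    simpa using ((hasDerivAt_id t).smul_const v).const_add x
  have h3 := h1.comp_hasDerivAt t h2
  simpa [Function.comp_def] using h3

theorem gtb_descent {d : ℕ} {f : EuclideanSpace ℝ (Fin d) → ℝ} (hf : Differentiable ℝ f)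
    (L : ℝ) (hs : ∀ x y, ‖gradient f y - gradient f x‖ ≤ L * ‖x - y‖)
    (x v : EuclideanSpace ℝ (Fin d)) :
    f (x + v) ≤ f x + inner ℝ (gradient f x) v + L / 2 * ‖v‖ ^ 2 := by
  let h : ℝ → ℝ := fun s => f (x + s • v) - s * inner ℝ (gradient f x) v
    - s ^ 2 * (L / 2 * ‖v‖ ^ 2)
  have hd : ∀ t, HasDerivAt h (inner ℝ (gradient f (x + t • v)) v
      - inner ℝ (gradient f x) v - 2 * t * (L / 2 * ‖v‖ ^ 2)) t := by
    intro t
    have a := gtb_line hf x v t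
    have b := (hasDerivAt_id t).mul_const (inner ℝ (gradient f x) v)
    have c := (hasDerivAt_pow 2 t).mul_const (L / 2 * ‖v‖ ^ 2)
    have e := (a.sub b).sub c
    refine e.congr_deriv ?_
    norm_num
  have hanti : AntitoneOn h (Set.Icc 0 1) := by
    apply antitoneOn_of_deriv_nonpos (convex_Icc 0 1)
    · exact fun t _ => (hd t).continuousAt.continuousWithinAt
    · exact fun t _ => (hd t).differentiableAt.differentiableWithinAt
    · intro t ht
      rw [interior_Icc] at ht
      rw [(hd t).deriv, ← inner_sub_left]
      have h1 := real_inner_le_norm (gradient f (x + t • v) - gradient f x) v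
      have h2 := hs x (x + t • v)
      have h3 : ‖x - (x + t • v)‖ = t * ‖v‖ := by
        rw [sub_add_cancel_left, norm_neg, norm_smul, Real.norm_of_nonneg ht.1.le]
      rw [h3] at h2
      have h4 := mul_le_mul_of_nonneg_right h2 (norm_nonneg v)
      nlinarith
  have := hanti (by simp : (0:ℝ) ∈ Set.Icc (0:ℝ) 1) (by simp : (1:ℝ) ∈ Set.Icc (0:ℝ) 1) zero_le_one
  simp only [h, one_smul, zero_smul, add_zero] at this
  linarith

theorem gtb_first {d : ℕ} {f : EuclideanSpace ℝ (Fin d) → ℝ} (hf : Differentiable ℝ f)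
    (hc : ConvexOn ℝ Set.univ f) (x v : EuclideanSpace ℝ (Fin d)) :
    f x + inner ℝ (gradient f x) v ≤ f (x + v) := by
  have hφ : ConvexOn ℝ Set.univ (fun s : ℝ => f (x + s • v)) := by
    refine ⟨convex_univ, ?_⟩
    intro s _ t _ a b ha hb hab
    have := hc.2 (Set.mem_univ (x + s • v)) (Set.mem_univ (x + t • v)) ha hb hab
    convert this using 2
    have : x = (a + b) • x := by rw [hab, one_smul]
    nth_rewrite 1 [this]
    simp only [smul_eq_mul]
    module
  have hd := gtb_line hf x v 0
  have := hφ.le_slope_of_hasDerivAt (Set.mem_univ 0) (Set.mem_univ 1) zero_lt_one hd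
  simp only [slope_def_field, one_smul, zero_smul, add_zero, sub_zero, div_one] at this
  linarith

theorem gtb_coco {d : ℕ} {f : EuclideanSpace ℝ (Fin d) → ℝ} (hf : Differentiable ℝ f)
    (hc : ConvexOn ℝ Set.univ f) (L : ℝ) (hL : 0 ≤ L)
    (hs : ∀ x y, ‖gradient f y - gradient f x‖ ≤ L * ‖x - y‖)
    (x y : EuclideanSpace ℝ (Fin d)) :
    ‖gradient f x - gradient f y‖ ^ 2 ≤
      2 * L * (f x - f y - inner ℝ (gradient f y) (x - y)) := by
  rcases hL.eq_or_lt with rfl | hL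
  · have := hs y x
    have h0 := norm_nonneg (gradient f x - gradient f y)
    have : ‖gradient f x - gradient f y‖ = 0 := by linarith
    simp [this]
  · set g := gradient f x - gradient f y with hg
    have h1 := gtb_descent hf L hs x (-(L⁻¹ • g))
    have h2 := gtb_first hf hc y (x - y + -(L⁻¹ • g))
    have e : y + (x - y + -(L⁻¹ • g)) = x + -(L⁻¹ • g) := by abel
    rw [e, inner_add_right] at h2
    rw [inner_neg_right, inner_smul_right] at h1 h2
    rw [norm_neg, norm_smul, mul_pow, Real.norm_of_nonneg (by positivity)] at h1
    have h3 : inner ℝ (gradient f x) g - inner ℝ (gradient f y) g = ‖g‖ ^ 2 := by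
      rw [← inner_sub_left, ← hg, real_inner_self_eq_norm_sq]
    have h4 : L⁻¹ * ‖g‖ ^ 2 / 2 ≤ f x - f y - inner ℝ (gradient f y) (x - y) := by
      have : L / 2 * (L⁻¹ ^ 2 * ‖g‖ ^ 2) = L⁻¹ * ‖g‖ ^ 2 / 2 := by field_simp
      rw [this] at h1
      have : L⁻¹ * inner ℝ (gradient f x) g - L⁻¹ * inner ℝ (gradient f y) g
        = L⁻¹ * ‖g‖ ^ 2 := by rw [← h3]; ring
      linarith
    have h5 := mul_le_mul_of_nonneg_left h4 (by positivity : 0 ≤ 2 * L)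
    have : 2 * L * (L⁻¹ * ‖g‖ ^ 2 / 2) = ‖g‖ ^ 2 := by field_simp
    linarith

theorem gtb_three {E : Type*} [SeminormedAddCommGroup E] (a b c : E) :
    ‖a‖ ^ 2 ≤ 3 * ‖a - b‖ ^ 2 + 3 * ‖b - c‖ ^ 2 + 3 * ‖c‖ ^ 2 := by
  have h : ‖a‖ ≤ ‖a - b‖ + ‖b - c‖ + ‖c‖ := by
    have := norm_add₃_le (a := a - b) (b := b - c) (c := c)
    simpa using this
  have h2 := pow_le_pow_left₀ (norm_nonneg a) h 2
  nlinarith [sq_nonneg (‖a - b‖ - ‖b - c‖), sq_nonneg (‖a - b‖ - ‖c‖),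
    sq_nonneg (‖b - c‖ - ‖c‖)]

/-- **Bound on the gradient term `T₁` in the convex consensus recursion.**
Let `f_1, …, f_n : ℝ^d → ℝ` be convex and `L`-smooth, let `f = (1/n)Σ_i f_i` attain its minimum
at `x*`, and set `ζ̄² = (1/n)Σ_i ‖∇f_i(x*)‖²`.  Then for any points `x_1, …, x_n` with average
`x̄ = (1/n)Σ_i x_i`:
`(1/n)·Σ_i ‖∇f_i(x_i)‖² ≤ (3L²/n)·Σ_i ‖x_i − x̄‖² + 6L·(f(x̄) − f(x*)) + 3ζ̄²`. -/
theorem gradient_term_bound_convex {d n : ℕ} (hn : 0 < n) (L : ℝ) (hL : 0 ≤ L)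
    (f : Fin n → EuclideanSpace ℝ (Fin d) → ℝ)
    (hdiff : ∀ i, Differentiable ℝ (f i))
    (hconv : ∀ i, ConvexOn ℝ Set.univ (f i))
    (hsmooth : ∀ i x y, ‖gradient (f i) y - gradient (f i) x‖ ≤ L * ‖x - y‖)
    (fbar : EuclideanSpace ℝ (Fin d) → ℝ)
    (hfbar : ∀ x, fbar x = (n : ℝ)⁻¹ * ∑ i, f i x)
    (xstar : EuclideanSpace ℝ (Fin d)) (hmin : ∀ y, fbar xstar ≤ fbar y)
    (ζ2 : ℝ) (hζ2 : ζ2 = (n : ℝ)⁻¹ * ∑ i, ‖gradient (f i) xstar‖ ^ 2)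
    (x : Fin n → EuclideanSpace ℝ (Fin d))
    (xbar : EuclideanSpace ℝ (Fin d)) (hxbar : xbar = (n : ℝ)⁻¹ • ∑ j, x j) :
    (n : ℝ)⁻¹ * ∑ i, ‖gradient (f i) (x i)‖ ^ 2 ≤
      (3 * L ^ 2 / n) * ∑ i, ‖x i - xbar‖ ^ 2
        + 6 * L * (fbar xbar - fbar xstar) + 3 * ζ2 := by
  have hn' : (0 : ℝ) < n := by exact_mod_cast hn
  have hopt : ∑ i, inner ℝ (gradient (f i) xstar) (xbar - xstar) = 0 := by
    have hd : HasDerivAt (fun s : ℝ => ∑ i, f i (xstar + s • (xbar - xstar)))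
        (∑ i, inner ℝ (gradient (f i) (xstar + (0 : ℝ) • (xbar - xstar))) (xbar - xstar)) 0 :=
      HasDerivAt.fun_sum fun i _ => gtb_line (hdiff i) xstar (xbar - xstar) 0
    have hm : IsLocalMin (fun s : ℝ => ∑ i, f i (xstar + s • (xbar - xstar))) 0 := by
      refine Filter.Eventually.of_forall fun s => ?_
      have := hmin (xstar + s • (xbar - xstar))
      rw [hfbar, hfbar] at this
      have := le_of_mul_le_mul_left this (by positivity)
      simpa using this
    have := hm.hasDerivAt_eq_zero hd
    simpa using this
  have key : ∀ i, ‖gradient (f i) (x i)‖ ^ 2 ≤ 3 * L ^ 2 * ‖x i - xbar‖ ^ 2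
      + 6 * L * (f i xbar - f i xstar - inner ℝ (gradient (f i) xstar) (xbar - xstar))
      + 3 * ‖gradient (f i) xstar‖ ^ 2 := by
    intro i
    have h1 := gtb_three (gradient (f i) (x i)) (gradient (f i) xbar) (gradient (f i) xstar)
    have h2 := gtb_coco (hdiff i) (hconv i) L hL (hsmooth i) xbar xstar
    have h3 := pow_le_pow_left₀ (norm_nonneg _) (hsmooth i xbar (x i)) 2
    rw [mul_pow, norm_sub_rev xbar] at h3
    linarith
  have hsum := Finset.sum_le_sum fun i (_ : i ∈ Finset.univ) => key i
  rw [Finset.sum_add_distrib, Finset.sum_add_distrib, ← Finset.mul_sum, ← Finset.mul_sum,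
    ← Finset.mul_sum, Finset.sum_sub_distrib, Finset.sum_sub_distrib, hopt, sub_zero] at hsum
  have := mul_le_mul_of_nonneg_left hsum (by positivity : 0 ≤ (n : ℝ)⁻¹)
  rw [hfbar, hfbar, hζ2]
  refine this.trans (le_of_eq ?_)
  rw [div_eq_mul_inv]
  ring
end

section
/- Lower bound (Theorem 3): Let n > 1 and let W ∈ [0,1]^{n×n} be a symmetric doubly stochastic matrix with second-largest eigenvalue λ₂ = √(1−p), where 0 < p < 1, and let v ∈ ℝ^n be a unit-scaled eigenvector of W for λ₂ (so v ⊥ 1). Define y = 1 + v ∈ ℝ^n, f_i(x) = (1/2)(x − y_i)² for x ∈ ℝ (so L = μ = 1, no stochastic noise, minimizer x* = 1, and ζ̄² = ‖v‖²/n > 0). Consider the deterministic decentralized gradient iterates x^{(t+1)} = W·(x^{(t)} − η·(x^{(t)} − y)) ∈ ℝ^n started at x^{(0)} = v with any constant stepsize η > 0. Then for any target accuracy ε with 0 < ε ≤ ζ̄²(1−p)/16, in order to have (1/n)·‖x^{(T)} − x*·1‖² ≤ ε it is necessary that T ≥ ζ̄·√(1−p)·log(1/ε)/(4·√ε·p).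 In particular, decentralized SGD with τ = 1 on these strongly convex smooth functions requires T = Ω̃( ζ̄·(1−p)/(√ε·p) ) iterations to reach accuracy ε. -/
set_option maxHeartbeats 2000000 in
/-- **Lower bound** (Theorem 3, `thm:lower_bound`).
Let `n > 1`, let `W` be a symmetric doubly stochastic matrix with entries in `[0,1]` whose
second-largest eigenvalue is `λ₂ = √(1−p)` (`0 < p < 1`), and let `v ≠ 0` be an eigenvector of
`W` for `λ₂` orthogonal to the all-ones vector.  Put `y = 1 + v`, `f_i(x) = ½(x − y_i)²`
(so `L = μ = 1`, no stochastic noise, minimizer `x* = 1`, and `ζ̄² = ‖v‖²/n > 0`), and run the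
deterministic decentralized gradient iteration `x^{(t+1)} = W·(x^{(t)} − η·(x^{(t)} − y))`
started at `x^{(0)} = v` with constant stepsize `η > 0`.  Then for any accuracy
`0 < ε ≤ ζ̄²(1−p)/16`, achieving `(1/n)·‖x^{(T)} − x*·1‖² ≤ ε` forces
`T ≥ ζ̄·√(1−p)·log(1/ε)/(4·√ε·p)`. -/
theorem decentralized_lower_bound (n : ℕ) (hn : 1 < n)
    (p : ℝ) (hp : 0 < p) (hp1 : p < 1)
    (W : Matrix (Fin n) (Fin n) ℝ)
    (hWsym : W.IsSymm)
    (hWnonneg : ∀ i j, 0 ≤ W i j) (hWle : ∀ i j, W i j ≤ 1)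
    (hWrow : ∀ i, ∑ j, W i j = 1) (hWcol : ∀ j, ∑ i, W i j = 1)
    (v : Fin n → ℝ) (hv : v ≠ 0)
    (heig : W.mulVec v = Real.sqrt (1 - p) • v)
    (horth : ∑ i, v i = 0)
    (y : Fin n → ℝ) (hy : ∀ i, y i = 1 + v i)
    (ζ2 : ℝ) (hζ2 : ζ2 = (n : ℝ)⁻¹ * ∑ i, v i ^ 2)
    (η : ℝ) (hη : 0 < η)
    (x : ℕ → Fin n → ℝ)
    (hx0 : x 0 = v)
    (hdyn : ∀ t, x (t + 1) = W.mulVec (x t - η • (x t - y)))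
    (ε : ℝ) (hε : 0 < ε) (hεsmall : ε ≤ ζ2 * (1 - p) / 16)
    (T : ℕ)
    (hacc : (n : ℝ)⁻¹ * ∑ i, (x T i - 1) ^ 2 ≤ ε) :
    Real.sqrt ζ2 * Real.sqrt (1 - p) * Real.log (1 / ε) / (4 * Real.sqrt ε * p) ≤ (T : ℝ) := by
  have hn0 : (n : ℝ) ≠ 0 := by
    have : n ≠ 0 := by omega
    exact_mod_cast this
  set l := Real.sqrt (1 - p) with hl
  have hl0 : 0 < l := Real.sqrt_pos.mpr (by linarith)
  have hlsq : l ^ 2 = 1 - p := Real.sq_sqrt (by linarith)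
  have hl1 : l < 1 := by nlinarith
  -- the scalar recursion for the component along the eigenvector
  obtain ⟨b, hb0, hbs⟩ : ∃ b : ℕ → ℝ, b 0 = 1 ∧ ∀ t, b (t + 1) = l * ((1 - η) * b t + η) :=
    ⟨fun t => Nat.rec 1 (fun _ c => l * ((1 - η) * c + η)) t, rfl, fun _ => rfl⟩
  have hxt : ∀ t, x t = fun i => (1 - (1 - η) ^ t) + b t * v i := by
    intro t
    induction t with
    | zero => rw [hx0, hb0]; funext i; simp
    | succ t ih =>
      rw [hdyn, ih]
      funext i
      have he : ∑ j, W i j * v j = l * v i := by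
        have := congrFun heig i
        simpa [Matrix.mulVec, dotProduct] using this
      have h1 : W.mulVec ((fun i => (1 - (1 - η) ^ t) + b t * v i) -
          η • ((fun i => (1 - (1 - η) ^ t) + b t * v i) - y)) i
          = (1 - (1 - η) ^ (t + 1)) * (∑ j, W i j)
            + ((1 - η) * b t + η) * ∑ j, W i j * v j := by
        rw [Finset.mul_sum, Finset.mul_sum, ← Finset.sum_add_distrib]
        simp only [Matrix.mulVec, dotProduct]
        refine Finset.sum_congr rfl fun j _ => ?_
        simp only [Pi.sub_apply, Pi.smul_apply, smul_eq_mul, hy]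
        ring
      rw [h1, hWrow, he, hbs]
      ring
  have herr : ((1 - η) ^ T) ^ 2 + b T ^ 2 * ζ2 ≤ ε := by
    have h2 : ∑ i, (x T i - 1) ^ 2
        = n * ((1 - η) ^ T) ^ 2 - 2 * (1 - η) ^ T * b T * (∑ i, v i)
          + b T ^ 2 * ∑ i, v i ^ 2 := by
      have h3 : (n : ℝ) * ((1 - η) ^ T) ^ 2 = ∑ _i : Fin n, ((1 - η) ^ T) ^ 2 := by simp
      rw [h3, Finset.mul_sum, Finset.mul_sum, ← Finset.sum_sub_distrib, ← Finset.sum_add_distrib]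
      refine Finset.sum_congr rfl fun i _ => ?_
      rw [hxt]
      ring
    rw [h2, horth] at hacc
    calc _ = (n : ℝ)⁻¹ * (n * ((1 - η) ^ T) ^ 2 - 2 * (1 - η) ^ T * b T * 0
          + b T ^ 2 * ∑ i, v i ^ 2) := by rw [hζ2]; field_simp; ring
      _ ≤ ε := hacc
  have hζpos : 0 < ζ2 := by
    by_contra h
    nlinarith
  set z := Real.sqrt ζ2 with hz
  set e := Real.sqrt ε with he
  have hz0 : 0 < z := Real.sqrt_pos.mpr hζpos
  have he0 : 0 < e := Real.sqrt_pos.mpr hε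
  have hzsq : z ^ 2 = ζ2 := Real.sq_sqrt hζpos.le
  have hesq : e ^ 2 = ε := Real.sq_sqrt hε.le
  have hez : e ≤ z * l / 4 := by
    refine (sq_le_sq₀ he0.le (by positivity)).mp ?_
    rw [hesq, div_pow, mul_pow, hzsq, hlsq]
    linarith
  have hzb : z * b T ≤ e := by
    refine le_of_not_gt fun hc => ?_
    have hc2 := pow_lt_pow_left₀ hc he0.le two_ne_zero
    rw [mul_pow, hzsq, hesq] at hc2
    nlinarith [sq_nonneg ((1 - η) ^ T)]
  have hpow : ((1 - η) ^ 2) ^ T ≤ ε := by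
    rw [← pow_mul, mul_comm, pow_mul]
    nlinarith [mul_nonneg (sq_nonneg (b T)) hζpos.le]
  have hT0 : (0 : ℝ) ≤ T := Nat.cast_nonneg T
  rw [div_le_iff₀ (by positivity)]
  rcases le_or_gt 1 ε with h1 | h1
  · have : Real.log (1 / ε) ≤ 0 :=
      Real.log_nonpos (by positivity) (by rw [div_le_one hε]; exact h1)
    have h5 : z * l * Real.log (1 / ε) ≤ 0 := mul_nonpos_of_nonneg_of_nonpos (by positivity) this
    have h6 : 0 ≤ T * (4 * e * p) := by positivity
    linarith
  have hη2 : η < 2 := by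
    by_contra h
    push Not at h
    have : 1 ≤ ((1 - η) ^ 2) ^ T := one_le_pow₀ (by nlinarith)
    linarith
  rcases le_or_gt η 1 with hη1 | hη1
  · have hbl : ∀ t, l * η ≤ b t * (1 - l + l * η) := by
      intro t
      induction t with
      | zero => rw [hb0]; linarith
      | succ t ih =>
        rw [hbs]
        have := mul_le_mul_of_nonneg_left ih (mul_nonneg hl0.le (sub_nonneg.mpr hη1))
        nlinarith
    have hD : 0 < 1 - l + l * η := by nlinarith [mul_pos hl0 hη]
    have k1 : z * (l * η) ≤ e * (1 - l + l * η) :=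
      calc z * (l * η) ≤ z * (b T * (1 - l + l * η)) := mul_le_mul_of_nonneg_left (hbl T) hz0.le
        _ = (z * b T) * (1 - l + l * η) := by ring
        _ ≤ _ := mul_le_mul_of_nonneg_right hzb hD.le
    have k2 : η * (z - e) * l * (1 + l) ≤ e * p := by
      have hpl : p = (1 - l) * (1 + l) := by linear_combination hlsq
      have : η * (z - e) * l ≤ e * (1 - l) := by linarith
      have := mul_le_mul_of_nonneg_right this (by linarith : 0 ≤ 1 + l)
      rw [hpl]
      linarith
    have k3 : z ≤ (z - e) * (1 + l) := by
      have := mul_le_mul_of_nonneg_right hez (by linarith : 0 ≤ 1 + l)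
      have : 0 ≤ z * l * (1 - l) := mul_nonneg (by positivity) (by linarith)
      nlinarith [mul_pos hz0 hl0]
    have k4 : η * (z * l) ≤ e * p := by
      have := mul_le_mul_of_nonneg_left k3 (by positivity : 0 ≤ η * l)
      linarith
    have k5 : η ≤ 1 / 4 := by
      have hzl : 0 < z * l := by positivity
      have : η * (z * l) ≤ (1 / 4) * (z * l) := by
        have := mul_le_of_le_one_right he0.le hp1.le
        linarith
      exact le_of_mul_le_mul_right this hzl
    have k6 : Real.log (1 / ε) ≤ 4 * T * η := by
      have h7 : 0 < 1 - η := by linarith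
      have h8 := Real.log_le_log (by positivity) hpow
      rw [Real.log_pow, Real.log_pow] at h8
      rw [one_div, Real.log_inv]
      have h9 := Real.one_sub_inv_le_log_of_pos h7
      have h10 : (1 - η)⁻¹ ≤ 1 + 2 * η := by
        rw [inv_le_iff_one_le_mul₀ h7]
        nlinarith
      have h11 : -(2 * η) ≤ Real.log (1 - η) := by linarith
      have := mul_le_mul_of_nonneg_left h11 hT0
      push_cast at h8
      linarith
    have k7 := mul_le_mul_of_nonneg_left k6 (by positivity : 0 ≤ z * l)
    have k8 := mul_le_mul_of_nonneg_left k4 (by positivity : 0 ≤ 4 * (T : ℝ))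
    linarith
  · exfalso
    have hbl : ∀ t, l ≤ b t ∧ b t ≤ 1 := by
      intro t
      induction t with
      | zero => rw [hb0]; exact ⟨hl1.le, le_rfl⟩
      | succ t ih =>
        obtain ⟨i1, i2⟩ := ih
        rw [hbs]
        have hr : 0 ≤ l * (η - 1) := mul_nonneg hl0.le (by linarith)
        have hr1 : l * (η - 1) ≤ 1 := by nlinarith
        have j1 := mul_le_mul_of_nonneg_left i1 hr
        have j2 := mul_le_mul_of_nonneg_left i2 hr
        have j3 := mul_nonneg (sub_nonneg.mpr hl1.le) (sub_nonneg.mpr hr1)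
        constructor <;> linarith
    have := mul_le_mul_of_nonneg_left (hbl T).1 hz0.le
    have := mul_pos hz0 hl0
    linarith
end
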